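/- Let q be a prime power, let n ≥ 1, and let f(x) = Σ_{i=0}^{n−1} a_i x^{q^i} ∈ F_{q^n}[x]. For 1 ≤ μ ≤ n−1, the number of points of L_f of weight μ with respect to U_f equals the number of elements y_0 ∈ F_{q^n} satisfying H_0(y_0) = H_1(y_0) = … = H_{μ−1}(y_0) = 0 and H_μ(y_0) ≠ 0. -/

import Mathlib

/-!
For `c ∈ F_{q^n}`, the solutions of `f(x) = c x` form the kernel of the `q`-polynomial `g` obtained
from `f` by replacing `a_0` with `y = a_0 - c`, and `H(y)` is the Dickson matrix of `g`. So
`c ↦ a_0 - c` is the required bijection, by Csajbók's criterion: `k = dim ker g` is the first `m`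
with `H_m(y) ≠ 0`.

The criterion holds for any cyclic extension `F / K` of degree `n`, with a generator `σ` of its
Galois group in place of the Frobenius. A nonzero `U = ∑_{i < N} u_i σ^i` cannot vanish on a
`K`-subspace of dimension `N`. A vector `u` in the left kernel of the minor defining `H_m` is the
same as a `U` with `N = n - m` such that `U ∘ g` has no terms `σ^j` with `m ≤ j < n`.

* For `m < k`, vanishing on `im g` imposes only `n - k < n - m` linear conditions on `u`, so some
  `U ≠ 0` has `U ∘ g = 0`.
* For `m = k`, the composite `U ∘ g` involves only `σ^j` with `j < k` and vanishes on `ker g`, which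
  has dimension `k`, so it is zero. Then `U` vanishes on `im g`, which has dimension `n - k`, and
  `U = 0`.
-/

/-- `H_m(y)` evaluated at `y ∈ F_{q^n}`: the determinant of the `(n-m) × (n-m)` matrix
obtained from the matrix `H(y)` (the Dickson matrix of `f = ∑_{i=0}^{n-1} a_i x^{q^i}`
with each diagonal entry `a_0^{q^i}` replaced by `y^{q^i}`) by removing its first `m`
columns and last `m` rows. -/
noncomputable def Hdet (q n m : ℕ) {F : Type*} [Field F] (a : ℕ → F) (y : F) : F :=
  (Matrix.of fun i j : Fin (n - m) =>
      if i.val = j.val + m then y ^ q ^ i.val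
      else a ((j.val + m + n - i.val) % n) ^ q ^ i.val).det

lemma finrank_le_finrank_map_add_finrank_ker {K V V' : Type*} [DivisionRing K] [AddCommGroup V]
    [Module K V] [AddCommGroup V'] [Module K V'] (f : V →ₗ[K] V') (W : Submodule K V)
    [FiniteDimensional K W] [FiniteDimensional K f.ker] :
    Module.finrank K W ≤ Module.finrank K (W.map f) + Module.finrank K f.ker := by
  rw [← (f.domRestrict W).finrank_range_add_finrank_ker, LinearMap.range_domRestrict]
  gcongr
  rw [LinearMap.ker_domRestrict, ← Submodule.finrank_map_subtype_eq]
  exact Submodule.finrank_mono (Submodule.map_comap_le _ _)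

section LinearizedMap

open IntermediateField (fixedField)
open Subgroup (zpowers)
open scoped Matrix

variable {K F : Type*} [Field K] [Field F] [Algebra K F] {σ : Gal(F/K)}

/-- The map `x ↦ ∑_{i < N} c_i σ^i(x)` of a `σ`-polynomial, `F`-linear in the coefficients `c`.
For the Frobenius `σ` of `F / F_q` it is the map of the linearized polynomial
`∑_{i < N} c_i x^{q^i}`. -/
noncomputable def linearizedMap (σ : Gal(F/K)) {N : ℕ} : (Fin N → F) →ₗ[F] F →ₗ[K] F :=
  Fintype.linearCombination F fun i : Fin N => ((σ ^ (i : ℕ)).toLinearMap : F →ₗ[K] F)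

lemma linearizedMap_apply {N : ℕ} (c : Fin N → F) (x : F) :
    linearizedMap σ c x = ∑ i : Fin N, c i * (σ ^ (i : ℕ)) x := by
  simp [linearizedMap, Fintype.linearCombination_apply]

lemma linearizedMap_single_zero {n : ℕ} [NeZero n] (c x : F) :
    linearizedMap σ (Pi.single (0 : Fin n) c) x = c * x := by
  simp [linearizedMap, Fintype.linearCombination_apply_single]

lemma exists_ne_zero_le_ker_linearizedMap [FiniteDimensional K F] (σ : Gal(F/K)) {N : ℕ}
    {W : Submodule K F} (hW : Module.finrank K W < N) :
    ∃ u : Fin N → F, u ≠ 0 ∧ W ≤ (linearizedMap σ u).ker := by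
  let restrict : (F →ₗ[K] F) →ₗ[F] W →ₗ[K] F := LinearMap.lcomp F F W.subtype
  have hker : (restrict ∘ₗ linearizedMap σ (N := N)).ker ≠ ⊥ :=
    LinearMap.ker_ne_bot_of_finrank_lt (by simpa [Module.finrank_linearMap])
  obtain ⟨u, hu, hu0⟩ := Submodule.exists_mem_ne_zero_of_ne_bot hker
  exact ⟨u, hu0, fun x hx => LinearMap.congr_fun (LinearMap.mem_ker.1 hu) ⟨x, hx⟩⟩

lemma mem_range_algebraMap_of_apply_eq_self (hσ : fixedField (zpowers σ) = ⊥) {x : F}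
    (hx : σ x = x) : x ∈ (algebraMap K F).range := by
  have hfix : x ∈ fixedField (zpowers σ) := by
    rw [IntermediateField.mem_fixedField_iff, Subgroup.forall_mem_zpowers]
    exact MulAction.mem_fixedBy_zpowers_iff_mem_fixedBy.2
      (show x ∈ MulAction.fixedBy F σ from hx)
  rwa [hσ] at hfix

lemma pow_finrank_eq_one [FiniteDimensional K F] (hσ : fixedField (zpowers σ) = ⊥) :
    σ ^ Module.finrank K F = 1 := by
  have hcard := IntermediateField.finrank_fixedField_eq_card (zpowers σ)
  rw [hσ, IntermediateField.finrank_bot', Nat.card_zpowers] at hcard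
  rw [hcard, pow_orderOf_eq_one]

/-- The map `x ↦ σ(x / w) - x / w`, a first-order `σ`-polynomial vanishing at `w`; every
`σ`-polynomial vanishing at `w` factors through it. -/
noncomputable def twistedDiff (σ : Gal(F/K)) (w : F) : F →ₗ[K] F :=
  (σ.toLinearMap - LinearMap.id) ∘ₗ LinearMap.mulRight K w⁻¹

lemma twistedDiff_apply (w x : F) : twistedDiff σ w x = σ (x / w) - x / w := by
  simp [twistedDiff, div_eq_mul_inv]

lemma ker_twistedDiff_le_span_singleton (hσ : fixedField (zpowers σ) = ⊥) {w : F}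
    (hw : w ≠ 0) : (twistedDiff σ w).ker ≤ K ∙ w := by
  intro x hx
  rw [LinearMap.mem_ker, twistedDiff_apply, sub_eq_zero] at hx
  obtain ⟨k, hk⟩ := mem_range_algebraMap_of_apply_eq_self hσ hx
  exact Submodule.mem_span_singleton.2 ⟨k, by rw [Algebra.smul_def, hk, div_mul_cancel₀ _ hw]⟩

lemma finrank_le_finrank_map_twistedDiff_add_one (hσ : fixedField (zpowers σ) = ⊥) {w : F}
    (hw : w ≠ 0) (W : Submodule K F) [FiniteDimensional K W] :
    Module.finrank K W ≤ Module.finrank K (W.map (twistedDiff σ w)) + 1 := by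
  have hker := ker_twistedDiff_le_span_singleton hσ hw
  have := Submodule.finiteDimensional_of_le hker
  calc Module.finrank K W
      ≤ Module.finrank K (W.map (twistedDiff σ w)) + Module.finrank K (twistedDiff σ w).ker :=
        finrank_le_finrank_map_add_finrank_ker _ W
    _ ≤ Module.finrank K (W.map (twistedDiff σ w)) + 1 := by
        gcongr
        exact (Submodule.finrank_mono hker).trans_eq (finrank_span_singleton hw)

/-- Right division of a `σ`-polynomial by `twistedDiff σ w`; the quotient comes from summation by
parts. -/
lemma sum_mul_pow_apply_eq_neg_sum_twistedDiff {N : ℕ} {c : ℕ → F} {w : F} (hw : w ≠ 0)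
    (hcw : ∑ i ∈ Finset.range (N + 1), c i * (σ ^ i) w = 0) (x : F) :
    ∑ i ∈ Finset.range (N + 1), c i * (σ ^ i) x =
      -∑ i ∈ Finset.range N,
        (∑ l ∈ Finset.range (i + 1), c l * (σ ^ l) w) * (σ ^ i) (twistedDiff σ w x) := by
  calc ∑ i ∈ Finset.range (N + 1), c i * (σ ^ i) x
      = ∑ i ∈ Finset.range (N + 1), (σ ^ i) (x / w) • (c i * (σ ^ i) w) := by
        refine Finset.sum_congr rfl fun i _ => ?_
        rw [smul_eq_mul, mul_left_comm, ← map_mul, div_mul_cancel₀ _ hw]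
    _ = -∑ i ∈ Finset.range N,
          (∑ l ∈ Finset.range (i + 1), c l * (σ ^ l) w) * (σ ^ i) (twistedDiff σ w x) := by
        rw [Finset.sum_range_by_parts, Nat.add_sub_cancel, hcw, smul_zero, zero_sub]
        congr 1
        refine Finset.sum_congr rfl fun i _ => ?_
        rw [smul_eq_mul, mul_comm, twistedDiff_apply, map_sub, pow_succ, AlgEquiv.mul_apply]

lemma eq_zero_of_sum_mul_pow_apply_eq_zero (hσ : fixedField (zpowers σ) = ⊥) {N : ℕ}
    {c : ℕ → F} {W : Submodule K F} (hN : N ≤ Module.finrank K W)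
    (hW : ∀ x ∈ W, ∑ i ∈ Finset.range N, c i * (σ ^ i) x = 0) : ∀ i < N, c i = 0 := by
  induction N generalizing c W with
  | zero => simp
  | succ N ih =>
    have : FiniteDimensional K W := Module.finite_of_finrank_pos (by omega)
    obtain ⟨w, hwW, hw⟩ :=
      W.exists_mem_ne_zero_of_ne_bot (Submodule.one_le_finrank_iff.1 (by omega))
    have hpartial : ∀ i ≤ N + 1, ∑ l ∈ Finset.range i, c l * (σ ^ l) w = 0 := by
      rintro (_ | i) hi
      · simp
      obtain hi | rfl := (Nat.le_of_succ_le_succ hi).lt_or_eq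
      · refine ih (c := fun i => ∑ l ∈ Finset.range (i + 1), c l * (σ ^ l) w)
          (W := W.map (twistedDiff σ w)) ?_ ?_ i hi
        · have := finrank_le_finrank_map_twistedDiff_add_one hσ hw W
          omega
        · rintro _ ⟨x, hx, rfl⟩
          rw [← neg_eq_zero, ← sum_mul_pow_apply_eq_neg_sum_twistedDiff hw (hW w hwW), hW x hx]
      · exact hW w hwW
    intro i hi
    have hterm : c i * (σ ^ i) w = 0 := by
      rw [← Finset.sum_range_succ_sub_sum (fun l => c l * (σ ^ l) w), hpartial _ hi,
        hpartial _ hi.le, sub_zero]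
    exact (mul_eq_zero.1 hterm).resolve_right ((map_ne_zero _).2 hw)

lemma eq_zero_of_le_ker_linearizedMap (hσ : fixedField (zpowers σ) = ⊥) {N : ℕ}
    {c : Fin N → F} {W : Submodule K F}
    (hc : ∀ i : Fin N, Module.finrank K W ≤ i → c i = 0)
    (hW : W ≤ (linearizedMap σ c).ker) : c = 0 := by
  set c' : ℕ → F := Function.extend Fin.val c 0
  have hc' (i : Fin N) : c' i = c i := Fin.val_injective.extend_apply _ _ i
  have hsum (x : F) : ∑ i ∈ Finset.range (min N (Module.finrank K W)), c' i * (σ ^ i) x =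
      linearizedMap σ c x := by
    simp only [linearizedMap_apply, ← hc', ← Finset.sum_range (fun i => c' i * (σ ^ i) x)]
    refine Finset.sum_subset (by simp) fun i hi hid => ?_
    simp only [Finset.mem_range, lt_min_iff, not_and, not_lt] at hi hid
    rw [hc' ⟨i, hi⟩, hc _ (hid hi), zero_mul]
  funext i
  obtain hi | hi := lt_or_ge i.val (Module.finrank K W)
  · rw [← hc']
    exact eq_zero_of_sum_mul_pow_apply_eq_zero hσ (min_le_right _ _)
      (fun x hx => (hsum x).trans (hW hx)) i (lt_min i.2 hi)
  · exact hc i hi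

/-- The matrix `(σ^i(a_{j-i}))`, whose row `i` lists the coefficients of `σ^i ∘ ∑_l a_l σ^l` when
`σ^n = 1`. For the Frobenius of `F_{q^n} / F_q` it is the Dickson matrix `(a_{(j-i) mod n}^{q^i})`:
the subtraction in `Fin n` is cyclic. -/
def dicksonMatrix (σ : Gal(F/K)) {n : ℕ} (a : Fin n → F) : Matrix (Fin n) (Fin n) F :=
  Matrix.of fun i j => (σ ^ (i : ℕ)) (a (j - i))

/-- The Dickson matrix with its first `m` columns and its last `m` rows removed, whose
determinant is `H_m` (`Hdet_sub_eq_det_dicksonMinor`). -/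
def dicksonMinor (σ : Gal(F/K)) {n : ℕ} (m : ℕ) (a : Fin n → F) :
    Matrix (Fin (n - m)) (Fin (n - m)) F :=
  (dicksonMatrix σ a).submatrix (Fin.castLE (n.sub_le m)) fun j => ⟨j + m, by omega⟩

lemma linearizedMap_linearizedMap {n N : ℕ} (hN : N ≤ n) (hσn : σ ^ n = 1) (u : Fin N → F)
    (a : Fin n → F) (x : F) :
    linearizedMap σ u (linearizedMap σ a x) =
      linearizedMap σ (u ᵥ* (dicksonMatrix σ a).submatrix (Fin.castLE hN) id) x := by
  simp only [linearizedMap_apply, Matrix.vecMul, dotProduct, Finset.sum_mul, map_sum, map_mul]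
  refine Finset.sum_comm.trans ((Finset.sum_congr rfl fun i _ => ?_).trans Finset.sum_comm)
  have : NeZero n := ⟨by have := i.2; omega⟩
  refine Fintype.sum_equiv (Equiv.addRight (Fin.castLE hN i)) _ _ fun l => ?_
  have hpow : σ ^ ((l + Fin.castLE hN i : Fin n) : ℕ) = σ ^ (i : ℕ) * σ ^ (l : ℕ) := by
    rw [Fin.val_add, ← pow_eq_pow_mod _ hσn, add_comm, pow_add, Fin.val_castLE]
  simp [dicksonMatrix, hpow, mul_assoc]

lemma det_dicksonMinor_eq_zero [FiniteDimensional K F] (hσ : fixedField (zpowers σ) = ⊥)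
    {n m : ℕ} (hn : Module.finrank K F = n) {a : Fin n → F}
    (hm : m < Module.finrank K (linearizedMap σ a).ker) : (dicksonMinor σ m a).det = 0 := by
  have hrank := (linearizedMap σ a).finrank_range_add_finrank_ker
  have hσn : σ ^ n = 1 := hn ▸ pow_finrank_eq_one hσ
  obtain ⟨u, hu0, hu⟩ := exists_ne_zero_le_ker_linearizedMap σ (N := n - m)
    (W := (linearizedMap σ a).range) (by omega)
  have hcomp : u ᵥ* (dicksonMatrix σ a).submatrix (Fin.castLE (n.sub_le m)) id = 0 := by
    refine eq_zero_of_le_ker_linearizedMap hσ (W := ⊤) (fun i hi => ?_) fun x _ => ?_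
    · rw [finrank_top] at hi
      omega
    · rw [LinearMap.mem_ker, ← linearizedMap_linearizedMap _ hσn]
      exact hu (LinearMap.mem_range_self _ x)
  exact Matrix.exists_vecMul_eq_zero_iff.1
    ⟨u, hu0, funext fun j => congrFun hcomp ⟨j + m, by omega⟩⟩

lemma det_dicksonMinor_finrank_ker_ne_zero [FiniteDimensional K F]
    (hσ : fixedField (zpowers σ) = ⊥) {n : ℕ} (hn : Module.finrank K F = n) (a : Fin n → F) :
    (dicksonMinor σ (Module.finrank K (linearizedMap σ a).ker) a).det ≠ 0 := by
  set m := Module.finrank K (linearizedMap σ a).ker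
  have hrank := (linearizedMap σ a).finrank_range_add_finrank_ker
  have hσn : σ ^ n = 1 := hn ▸ pow_finrank_eq_one hσ
  intro hdet
  obtain ⟨u, hu0, hu⟩ := Matrix.exists_vecMul_eq_zero_iff.2 hdet
  have hcomp : u ᵥ* (dicksonMatrix σ a).submatrix (Fin.castLE (n.sub_le m)) id = 0 := by
    refine eq_zero_of_le_ker_linearizedMap hσ (W := (linearizedMap σ a).ker) (fun j hj => ?_)
      fun x hx => ?_
    · have hj' : (⟨j - m + m, by omega⟩ : Fin n) = j := Fin.ext (Nat.sub_add_cancel hj)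
      exact hj' ▸ congrFun hu ⟨j - m, by omega⟩
    · rw [LinearMap.mem_ker, ← linearizedMap_linearizedMap _ hσn, LinearMap.mem_ker.1 hx,
        map_zero]
  refine hu0 (eq_zero_of_le_ker_linearizedMap hσ (W := (linearizedMap σ a).range) ?_ ?_)
  · intro i hi
    omega
  · rintro _ ⟨x, rfl⟩
    rw [LinearMap.mem_ker, linearizedMap_linearizedMap (n.sub_le m) hσn, hcomp, map_zero,
      LinearMap.zero_apply]

/-- Csajbók's criterion, here for any cyclic extension. -/
theorem finrank_ker_linearizedMap_eq_iff [FiniteDimensional K F]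
    (hσ : fixedField (zpowers σ) = ⊥) {n k : ℕ} (hn : Module.finrank K F = n) {a : Fin n → F} :
    Module.finrank K (linearizedMap σ a).ker = k ↔
      (∀ m < k, (dicksonMinor σ m a).det = 0) ∧ (dicksonMinor σ k a).det ≠ 0 := by
  constructor
  · rintro rfl
    exact ⟨fun m hm => det_dicksonMinor_eq_zero hσ hn hm,
      det_dicksonMinor_finrank_ker_ne_zero hσ hn a⟩
  · rintro ⟨hzero, hne⟩
    refine le_antisymm (le_of_not_gt fun hk => hne (det_dicksonMinor_eq_zero hσ hn hk)) ?_
    exact le_of_not_gt fun hk => det_dicksonMinor_finrank_ker_ne_zero hσ hn a (hzero _ hk)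

end LinearizedMap

section Frobenius

variable {K F : Type*} [Field K] [Fintype K] [Field F] [Finite F] [Algebra K F]

open FiniteField

lemma frobeniusAlgEquivOfAlgebraic_pow_apply (i : ℕ) (x : F) :
    (frobeniusAlgEquivOfAlgebraic K F ^ i) x = x ^ Fintype.card K ^ i := by
  rw [AlgEquiv.coe_pow, coe_frobeniusAlgEquivOfAlgebraic_iterate]

variable (K F) in
lemma fixedField_zpowers_frobeniusAlgEquivOfAlgebraic :
    IntermediateField.fixedField (Subgroup.zpowers (frobeniusAlgEquivOfAlgebraic K F)) = ⊥ := by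
  have htop : Subgroup.zpowers (frobeniusAlgEquivOfAlgebraic K F) = ⊤ := by
    refine (Subgroup.eq_top_iff' _).2 fun τ => ?_
    obtain ⟨i, rfl⟩ := (bijective_frobeniusAlgEquivOfAlgebraic_pow K F).2 τ
    exact Subgroup.npow_mem_zpowers _ _
  rw [htop, IsGalois.fixedField_top]

lemma Hdet_sub_eq_det_dicksonMinor {n : ℕ} [NeZero n] (m : ℕ) (a : ℕ → F) (c : F) :
    Hdet (Fintype.card K) n m a (a 0 - c) =
      (dicksonMinor (frobeniusAlgEquivOfAlgebraic K F) m
        ((fun i : Fin n => a i) - Pi.single 0 c)).det := by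
  unfold Hdet
  congr 1
  ext i j
  have hdiag :
      (⟨j + m, by omega⟩ : Fin n) - Fin.castLE (n.sub_le m) i = 0 ↔ i.val = j.val + m := by
    rw [sub_eq_zero, Fin.ext_iff, eq_comm, Fin.val_castLE]
  simp only [dicksonMinor, dicksonMatrix, Matrix.submatrix_apply, Matrix.of_apply, Pi.sub_apply,
    frobeniusAlgEquivOfAlgebraic_pow_apply, Fin.val_castLE]
  split_ifs with h
  · simp [hdiag.2 h]
  · rw [Pi.single_eq_of_ne (mt hdiag.1 h), sub_zero, Fin.val_sub]
    congr 3
    simp only [Fin.val_castLE]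
    omega

lemma mem_ker_linearizedMap_sub_single_iff {n : ℕ} [NeZero n] (a : ℕ → F) (c x : F) :
    x ∈ (linearizedMap (frobeniusAlgEquivOfAlgebraic K F)
        ((fun i : Fin n => a i) - Pi.single 0 c)).ker ↔
      ∑ i ∈ Finset.range n, a i * x ^ Fintype.card K ^ i = c * x := by
  rw [LinearMap.mem_ker, map_sub, LinearMap.sub_apply, linearizedMap_single_zero, sub_eq_zero,
    linearizedMap_apply, Finset.sum_range]
  simp only [frobeniusAlgEquivOfAlgebraic_pow_apply]

lemma natCard_solutions_eq_pow_iff {n : ℕ} (hn : Module.finrank K F = n) (a : ℕ → F) (c : F)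
    (k : ℕ) :
    Nat.card {x : F // ∑ i ∈ Finset.range n, a i * x ^ Fintype.card K ^ i = c * x} =
        Fintype.card K ^ k ↔
      (∀ m < k, Hdet (Fintype.card K) n m a (a 0 - c) = 0) ∧
        Hdet (Fintype.card K) n k a (a 0 - c) ≠ 0 := by
  have : NeZero n := ⟨hn ▸ Module.finrank_pos.ne'⟩
  simp only [Hdet_sub_eq_det_dicksonMinor,
    ← finrank_ker_linearizedMap_eq_iff (fixedField_zpowers_frobeniusAlgEquivOfAlgebraic K F) hn,
    ← mem_ker_linearizedMap_sub_single_iff (K := K)]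
  rw [Module.natCard_eq_pow_finrank (K := K), Nat.card_eq_fintype_card,
    (Nat.pow_right_injective (Fintype.one_lt_card (α := K))).eq_iff]

end Frobenius

lemma exists_algebra_card_eq {p e n : ℕ} (hp : p.Prime) (he : 0 < e) (F : Type*) [Field F]
    [Fintype F] (hF : Fintype.card F = (p ^ e) ^ n) :
    ∃ (K : Type) (_ : Field K) (_ : Fintype K) (_ : Algebra K F), Fintype.card K = p ^ e := by
  have := Fact.mk hp
  have hF' : Fintype.card F = p ^ (e * n) := by rw [hF, pow_mul]
  have : CharP F p := charP_of_card_eq_prime_pow hF'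
  let _ : Algebra (ZMod p) F := ZMod.algebra F p
  have hfr : Module.finrank (ZMod p) F = e * n := by
    have := Module.card_eq_pow_finrank (K := ZMod p) (V := F)
    rw [hF', ZMod.card] at this
    exact (Nat.pow_right_injective hp.two_le this).symm
  obtain ⟨φ⟩ : Nonempty (GaloisField p e →ₐ[ZMod p] F) := by
    apply FiniteField.nonempty_algHom_of_finrank_dvd
    rw [GaloisField.finrank p he.ne', hfr]
    exact dvd_mul_right _ _
  let _ : Fintype (GaloisField p e) := Fintype.ofFinite _
  refine ⟨GaloisField p e, inferInstance, inferInstance, φ.toRingHom.toAlgebra, ?_⟩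
  rw [Fintype.card_eq_nat_card, GaloisField.card p e he.ne']

/-- Corollary (part 2): for `f = ∑_{i=0}^{n-1} a_i x^{q^i} ∈ F_{q^n}[x]` and
`1 ≤ μ ≤ n-1`, the number of points `⟨(1,c)⟩` of the linear set `L_f` having weight `μ`
with respect to `U_f` (a point of weight `μ` being one with
`#{x : f(x) = c·x} = q^μ`) equals the number of `y₀ ∈ F_{q^n}` with
`H_0(y₀) = ⋯ = H_{μ-1}(y₀) = 0` and `H_μ(y₀) ≠ 0`. -/
theorem stmt_13 (p e q n : ℕ) (hp : p.Prime) (he : 0 < e) (hq : q = p ^ e)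
    (hn : 0 < n) (F : Type*) [Field F] [Fintype F] (hF : Fintype.card F = q ^ n)
    (a : ℕ → F) (μ : ℕ) (hμ1 : 1 ≤ μ) (hμ2 : μ ≤ n - 1) :
    Nat.card {c : F //
        (∃ x : F, x ≠ 0 ∧ ∑ i ∈ Finset.range n, a i * x ^ q ^ i = c * x) ∧
        Nat.card {x : F // ∑ i ∈ Finset.range n, a i * x ^ q ^ i = c * x} = q ^ μ}
      = Nat.card {y : F // (∀ m, m < μ → Hdet q n m a y = 0) ∧ Hdet q n μ a y ≠ 0} := by
  obtain ⟨K, _, _, _, hK⟩ := exists_algebra_card_eq hp he F (hq ▸ hF)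
  obtain rfl := hK.trans hq.symm
  have hfin : Module.finrank K F = n :=
    Nat.pow_right_injective (Fintype.one_lt_card (α := K))
      ((Module.card_eq_pow_finrank (K := K) (V := F)).symm.trans hF)
  refine Nat.card_congr (Equiv.subtypeEquiv (Equiv.subLeft (a 0)) fun c => ?_)
  rw [Equiv.subLeft_apply, ← natCard_solutions_eq_pow_iff hfin, and_iff_right_iff_imp]
  intro hweight
  obtain ⟨x, hx, hx0⟩ := Set.exists_ne_of_one_lt_ncard
    (hweight ▸ Nat.one_lt_pow (Nat.one_le_iff_ne_zero.1 hμ1) Fintype.one_lt_card) 0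
  exact ⟨x, hx0, hx⟩
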